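/- For every integer r ≥ 2 and every pair {P, Q} of distinct r-patterns neither of which is collectable, the number z = z_{{P,Q}} defined as the maximum size of any {P, Q}-clique satisfies 2 ≤ z ≤ 5, and the probability that z_{{P,Q}}(RM_n^(r)) = z tends to 1 as n → ∞. -/

import Mathlib

open Finset
open scoped Classical

/-- An ordered `r`-matching of size `n`: a partition of `[r*n] = {1,…,r*n}` into `n`
pairwise disjoint `r`-element subsets (the edges). -/
def IsOrderedMatching (r n : ℕ) (M : Finset (Finset ℕ)) : Prop :=
  M.card = n ∧ (∀ e ∈ M, e.card = r) ∧
  (∀ e ∈ M, ∀ f ∈ M, e ≠ f → Disjoint e f) ∧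
  M.biUnion id = Finset.Icc 1 (r * n)

/-- Two disjoint `r`-element sets `e`, `f` form the `r`-pattern `P`: the unique
order-preserving bijection from `e ∪ f` onto `[2r]` maps the pair `{e, f}` onto `P`. -/
def FormsPattern (r : ℕ) (e f : Finset ℕ) (P : Finset (Finset ℕ)) : Prop :=
  ∃ φ : ℕ → ℕ, StrictMonoOn φ ↑(e ∪ f) ∧
    (e ∪ f).image φ = Finset.Icc 1 (2 * r) ∧
    ({e.image φ, f.image φ} : Finset (Finset ℕ)) = P

/-- A `Ps`-clique: a family of pairwise disjoint `r`-element subsets of `ℕ`, every two of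
which form a pattern belonging to `Ps`. -/
def IsClique (r : ℕ) (Ps : Set (Finset (Finset ℕ))) (K : Finset (Finset ℕ)) : Prop :=
  (∀ e ∈ K, e.card = r) ∧ (∀ e ∈ K, ∀ f ∈ K, e ≠ f → Disjoint e f) ∧
  (∀ e ∈ K, ∀ f ∈ K, e ≠ f → ∃ P ∈ Ps, FormsPattern r e f P)

/-- `z_Ps(M)`: the maximum size of a subfamily of `M` that is a `Ps`-clique. -/
noncomputable def zClique (r : ℕ) (Ps : Set (Finset (Finset ℕ))) (M : Finset (Finset ℕ)) : ℕ :=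
  sSup {k | ∃ K : Finset (Finset ℕ), K ⊆ M ∧ IsClique r Ps K ∧ K.card = k}

/-- All ordered `r`-matchings of size `n` (as a finset). -/
noncomputable def matchingFamilies (r n : ℕ) : Finset (Finset (Finset ℕ)) :=
  ((Finset.Icc 1 (r * n)).powerset.powerset).filter (IsOrderedMatching r n)

/-- The probability of the event `A` for a uniformly random ordered `r`-matching of size `n`. -/
noncomputable def prob (r n : ℕ) (A : Finset (Finset ℕ) → Prop) : ℝ :=
  (((matchingFamilies r n).filter A).card : ℝ) / ((matchingFamilies r n).card : ℝ)

/-- Expectation of `X` with respect to a uniformly random ordered `r`-matching of size `n`. -/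
noncomputable def expect (r n : ℕ) (X : Finset (Finset ℕ) → ℝ) : ℝ :=
  (∑ M ∈ matchingFamilies r n, X M) / ((matchingFamilies r n).card : ℝ)

/-- An `r`-partite `r`-pattern: each edge contains exactly one of `{2i-1, 2i}` for each
`i = 1, …, r`. -/
def IsPartitePattern (r : ℕ) (P : Finset (Finset ℕ)) : Prop :=
  IsOrderedMatching r 2 P ∧
  ∀ e ∈ P, ∀ i ∈ Finset.Icc 1 r, (e ∩ {2 * i - 1, 2 * i}).card = 1

/-- An `r`-pattern `P` is collectable if there exist arbitrarily large `{P}`-cliques. -/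
def Collectable (r : ℕ) (P : Finset (Finset ℕ)) : Prop :=
  ∀ k : ℕ, ∃ K : Finset (Finset ℕ), IsClique r {P} K ∧ K.card = k

/-- The word of a pattern `P` over `{A=true, B=false}`: the `j`-th letter is `true` iff
vertex `j` lies in the edge of `P` containing `1`. -/
noncomputable def patternWord (r : ℕ) (P : Finset (Finset ℕ)) : List Bool :=
  (List.range (2 * r)).map (fun j => decide (∃ e ∈ P, 1 ∈ e ∧ j + 1 ∈ e))

/-- `lam` is a splitting of the word `w` into consecutive blocks of the form
`A^t B^t` or `B^t A^t` with half-lengths given by `lam`. -/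
def IsBlockSplitting (w : List Bool) (lam : List ℕ) : Prop :=
  (∀ t ∈ lam, 1 ≤ t) ∧
  ∃ bs : List Bool, bs.length = lam.length ∧
    w = (List.zipWith (fun t b => List.replicate t b ++ List.replicate t !b) lam bs).flatten

/-- The pattern `P` has composition `lam` (the sequence of half-lengths of the blocks of
its unique splitting). -/
def HasComposition (r : ℕ) (P : Finset (Finset ℕ)) (lam : List ℕ) : Prop :=
  IsBlockSplitting (patternWord r P) lam

/-- Two distinct collectable `r`-patterns are harmonious if they have the same composition. -/
def Harmonious (r : ℕ) (P Q : Finset (Finset ℕ)) : Prop :=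
  P ≠ Q ∧ Collectable r P ∧ Collectable r Q ∧
  ∃ lam : List ℕ, HasComposition r P lam ∧ HasComposition r Q lam

/-- A pair of distinct `r`-patterns is a mismatch if exactly one of them is collectable, or
both are collectable but their compositions differ. -/
def Mismatch (r : ℕ) (P Q : Finset (Finset ℕ)) : Prop :=
  P ≠ Q ∧
  ((Collectable r P ∧ ¬ Collectable r Q) ∨
   (¬ Collectable r P ∧ Collectable r Q) ∨
   (Collectable r P ∧ Collectable r Q ∧
     ¬ ∃ lam : List ℕ, HasComposition r P lam ∧ HasComposition r Q lam))

/-- The trace of an ordered `r`-matching of size `k` on `[rk]`: the `j`-th letter equals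
`i` when `j` is the `i`-th smallest element of the edge containing `j`. -/
noncomputable def trace (r k : ℕ) (M : Finset (Finset ℕ)) : List ℕ :=
  (List.range (r * k)).map (fun j₀ =>
    ((Finset.Icc 1 (r * k)).filter
      (fun x => x ≤ j₀ + 1 ∧ ∃ e ∈ M, j₀ + 1 ∈ e ∧ x ∈ e)).card)

/-- `a_Ps(k)`: the number of `Ps`-cliques of size `k` whose edges partition `[rk]`. -/
noncomputable def cliqueCount (r : ℕ) (Ps : Set (Finset (Finset ℕ))) (k : ℕ) : ℕ :=
  (((Finset.Icc 1 (r * k)).powerset.powerset).filter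
    (fun M => IsOrderedMatching r k M ∧ IsClique r Ps M)).card

/-- The maximum size of any `Ps`-clique whatsoever. -/
noncomputable def maxCliqueSize (r : ℕ) (Ps : Set (Finset (Finset ℕ))) : ℕ :=
  sSup {k | ∃ K : Finset (Finset ℕ), IsClique r Ps K ∧ K.card = k}

/-- `M` contains a copy of the ordered `r`-matching `H` of size `k`: a subfamily `N ⊆ M` of
`k` edges such that the order-preserving bijection from the union of the edges of `N`
onto `[rk]` maps `N` onto `H`. -/
def ContainsCopy (r k : ℕ) (H M : Finset (Finset ℕ)) : Prop :=
  ∃ N ⊆ M, N.card = k ∧ ∃ φ : ℕ → ℕ,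
    StrictMonoOn φ ↑(N.biUnion id) ∧
    (N.biUnion id).image φ = Finset.Icc 1 (r * k) ∧
    N.image (fun e => e.image φ) = H

/-- Delete the `j`-th smallest element of the finite set `e`. -/
def deleteJth (j : ℕ) (e : Finset ℕ) : Finset ℕ :=
  e.filter (fun x => (e.filter (· ≤ x)).card ≠ j)

/-- Relabel the elements of `e` order-preservingly by their ranks in `V`. -/
def relabel (V : Finset ℕ) (e : Finset ℕ) : Finset ℕ :=
  e.image (fun x => (V.filter (· ≤ x)).card)

/-- `S^(−j)`: delete from each edge of the pattern `S` its `j`-th smallest element and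
relabel the remaining vertices order-preservingly. -/
def patternDelete (j : ℕ) (S : Finset (Finset ℕ)) : Finset (Finset ℕ) :=
  (S.image (deleteJth j)).image (relabel ((S.image (deleteJth j)).biUnion id))

/-!
Whether a pattern dictates a consistent order on the vertices of arbitrarily many edges is a
question of transitivity, which involves only three edges at a time. Hence three edges pairwise
forming `P` already make `P` collectable, and since every 2-colouring of the pairs of six points
has a monochromatic triangle, a `{P, Q}`-clique has at most five edges.

For the random matching, fix a clique of maximum size and replace every point by a block of about
`n / N` consecutive integers. One edge of the matching chosen in the blow-up of each edge of the
clique gives a clique of the same size. The number of edges in a blow-up has expectation of order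
`n`, and its second moment is asymptotically the square of the expectation, so by Cauchy-Schwarz
each of the boundedly many blow-ups is met with probability tending to `1`.
-/

section Interleaving

variable {ι κ : Type*} [LinearOrder ι] [LinearOrder κ] {r : ℕ} {T : Fin r → Fin r → Prop}

/-- The relation on the entries `(x, i)` of a family of `r`-tuples indexed by a linear order in
which every tuple is increasing and, for tuples `x < y`, entry `i` of `x` precedes entry `j` of
`y` exactly when `T i j`. For a general `T` it is not transitive. -/
def InterleavedLT (T : Fin r → Fin r → Prop) (p q : ι × Fin r) : Prop :=
  (p.1 < q.1 ∧ T p.2 q.2) ∨ (p.1 = q.1 ∧ p.2 < q.2) ∨ (q.1 < p.1 ∧ ¬ T q.2 p.2)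

/-- The `r`-tuples `a x` of natural numbers are increasing and pairwise disjoint, and any two of
them compare according to `T`; see `InterleavedLT`. -/
def IsInterleaving (T : Fin r → Fin r → Prop) (a : ι → Fin r → ℕ) : Prop :=
  ∀ p q : ι × Fin r, a p.1 p.2 < a q.1 q.2 ↔ InterleavedLT T p q

lemma interleavedLT_map_iff {σ : ι → κ} {s : Set ι} (hσ : StrictMonoOn σ s) {p q : ι × Fin r}
    (hp : p.1 ∈ s) (hq : q.1 ∈ s) :
    InterleavedLT T (σ p.1, p.2) (σ q.1, q.2) ↔ InterleavedLT T p q := by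
  simp only [InterleavedLT, hσ.lt_iff_lt hp hq, hσ.lt_iff_lt hq hp, hσ.injOn.eq_iff hp hq]

lemma IsInterleaving.comp {a : κ → Fin r → ℕ} (ha : IsInterleaving T a) {σ : ι → κ}
    (hσ : StrictMono σ) : IsInterleaving T (a ∘ σ) := fun p q =>
  (ha (σ p.1, p.2) (σ q.1, q.2)).trans
    (interleavedLT_map_iff (hσ.strictMonoOn Set.univ) (Set.mem_univ _) (Set.mem_univ _))

lemma interleavedLT_irrefl (p : ι × Fin r) : ¬ InterleavedLT T p p := by
  simp [InterleavedLT]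

lemma interleavedLT_trichotomous (p q : ι × Fin r) (hpq : ¬ InterleavedLT T p q)
    (hqp : ¬ InterleavedLT T q p) : p = q := by
  rcases lt_trichotomy p.1 q.1 with h | h | h
  · simp_all [InterleavedLT, h.ne, h.not_gt]
  · simp only [InterleavedLT, h, lt_irrefl, false_and, true_and, false_or, or_false] at hpq hqp
    exact Prod.ext h (le_antisymm (not_lt.mp hqp) (not_lt.mp hpq))
  · simp_all [InterleavedLT, h.ne', h.not_gt]

lemma IsInterleaving.apply_eq_apply_iff {a : ι → Fin r → ℕ} (ha : IsInterleaving T a) {x y : ι}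
    {i j : Fin r} : a x i = a y j ↔ x = y ∧ i = j := by
  refine ⟨fun h => Prod.mk_inj.mp ?_, by rintro ⟨rfl, rfl⟩; rfl⟩
  exact interleavedLT_trichotomous (x, i) (y, j) ((ha _ _).not.mp h.not_lt)
    ((ha _ _).not.mp h.not_gt)

lemma exists_strictMonoOn_fin {s : Finset ι} {n : ℕ} [NeZero n] (hs : s.card ≤ n) :
    ∃ σ : ι → Fin n, StrictMonoOn σ s := by
  let σ (x : ι) : Fin n :=
    if hx : x ∈ s then Fin.castLE hs ((s.orderIsoOfFin rfl).symm ⟨x, hx⟩) else 0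
  refine ⟨σ, fun x hx y hy hxy => ?_⟩
  simpa [σ, mem_coe.mp hx, mem_coe.mp hy, (Fin.strictMono_castLE hs).lt_iff_lt] using hxy

-- An instance of transitivity involves at most three tuples, and so can be tested on `a`.
lemma IsInterleaving.interleavedLT_trans {a : Fin 3 → Fin r → ℕ} (ha : IsInterleaving T a)
    (p q s : ι × Fin r) (hpq : InterleavedLT T p q) (hqs : InterleavedLT T q s) :
    InterleavedLT T p s := by
  obtain ⟨σ, hσ⟩ := exists_strictMonoOn_fin (card_le_three (a := p.1) (b := q.1) (c := s.1))
  rw [← interleavedLT_map_iff hσ (by simp) (by simp), ← ha] at hpq hqs ⊢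
  exact hpq.trans hqs

lemma exists_nat_lt_iff_rel {α : Type*} [Finite α] (R : α → α → Prop) [IsStrictTotalOrder α R] :
    ∃ b : α → ℕ, ∀ p q, b p < b q ↔ R p q := by
  let _ : LinearOrder α := linearOrderOfSTO R
  obtain ⟨b⟩ := nonempty_orderEmbedding_of_finite_infinite α ℕ
  exact ⟨b, fun _ _ => b.lt_iff_lt⟩

theorem IsInterleaving.exists_isInterleaving [Finite ι] {a : Fin 3 → Fin r → ℕ}
    (ha : IsInterleaving T a) : ∃ b : ι → Fin r → ℕ, IsInterleaving T b := by
  have : IsStrictTotalOrder (ι × Fin r) (InterleavedLT T) :=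
    { irrefl := interleavedLT_irrefl
      trans := ha.interleavedLT_trans
      trichotomous := interleavedLT_trichotomous }
  obtain ⟨b, hb⟩ := exists_nat_lt_iff_rel (InterleavedLT T (ι := ι))
  exact ⟨fun x i => b (x, i), hb⟩

end Interleaving

section Pattern

variable {r : ℕ} {e f e' f' : Finset ℕ} {P : Finset (Finset ℕ)} {T : Fin r → Fin r → Prop}
  {ι κ : Type*} [LinearOrder ι] [LinearOrder κ]

lemma FormsPattern.symm (h : FormsPattern r e f P) : FormsPattern r f e P := by
  obtain ⟨φ, hφ, himg, hP⟩ := h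
  exact ⟨φ, by rwa [union_comm], by rwa [union_comm], by rwa [pair_comm]⟩

lemma FormsPattern.of_image {ψ : ℕ → ℕ} (hψ : StrictMonoOn ψ ↑(e ∪ f))
    (h : FormsPattern r (e.image ψ) (f.image ψ) P) : FormsPattern r e f P := by
  obtain ⟨φ, hφ, himg, hP⟩ := h
  rw [← image_union] at hφ himg
  refine ⟨φ ∘ ψ, hφ.comp hψ fun x hx => ?_, ?_, ?_⟩
  · exact mem_coe.mpr (mem_image_of_mem ψ hx)
  · rwa [← image_image]
  · rwa [← image_image, ← image_image]

lemma exists_strictMonoOn_of_lt_iff_lt {α β γ : Type*} [LinearOrder β] [LinearOrder γ] [Nonempty γ]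
    {c : α → β} {d : α → γ} (h : ∀ p q, c p < c q ↔ d p < d q) :
    ∃ ψ : β → γ, StrictMonoOn ψ (Set.range c) ∧ ∀ p, ψ (c p) = d p := by
  have hcd : d.FactorsThrough c := fun p q hpq => by
    refine le_antisymm (not_lt.mp ?_) (not_lt.mp ?_) <;> rw [← h] <;> simp [hpq]
  have hψ (p) := hcd.extend_apply (fun _ => Classical.arbitrary γ) p
  refine ⟨Function.extend c d fun _ => Classical.arbitrary γ, ?_, hψ⟩
  rintro _ ⟨p, rfl⟩ _ ⟨q, rfl⟩ hpq
  rwa [hψ, hψ, ← h]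

lemma IsInterleaving.formsPattern {a : ι → Fin r → ℕ} {b : κ → Fin r → ℕ}
    (ha : IsInterleaving T a) (hb : IsInterleaving T b) {x y : ι} (hxy : x < y) {z w : κ}
    (hzw : z < w) (h : FormsPattern r (univ.image (a x)) (univ.image (a y)) P) :
    FormsPattern r (univ.image (b z)) (univ.image (b w)) P := by
  have ha₂ := ha.comp (σ := ![x, y]) (by simpa [Fin.strictMono_iff_lt_succ] using hxy)
  have hb₂ := hb.comp (σ := ![z, w]) (by simpa [Fin.strictMono_iff_lt_succ] using hzw)
  obtain ⟨ψ, hψ, hψ_apply⟩ :=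
    exists_strictMonoOn_of_lt_iff_lt fun p q => (hb₂ p q).trans (ha₂ p q).symm
  have hz : (univ.image (b z)).image ψ = univ.image (a x) := by
    rw [image_image]; exact image_congr fun i _ => hψ_apply (0, i)
  have hw : (univ.image (b w)).image ψ = univ.image (a y) := by
    rw [image_image]; exact image_congr fun i _ => hψ_apply (1, i)
  refine FormsPattern.of_image (hψ.mono ?_) (by rwa [hz, hw])
  simp only [coe_union, coe_image, coe_univ, Set.image_univ, Set.union_subset_iff]
  exact ⟨Set.range_subset_iff.mpr fun i => ⟨(0, i), rfl⟩,
    Set.range_subset_iff.mpr fun i => ⟨(1, i), rfl⟩⟩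

lemma orderEmbOfFin_image {α β : Type*} [LinearOrder α] [LinearOrder β] {s : Finset α} {φ : α → β}
    (hφ : StrictMonoOn φ s) {k : ℕ} (hs : s.card = k) (hs' : (s.image φ).card = k) (i : Fin k) :
    (s.image φ).orderEmbOfFin hs' i = φ (s.orderEmbOfFin hs i) := by
  refine (congrFun (orderEmbOfFin_unique hs' (f := fun i => φ (s.orderEmbOfFin hs i))
    (fun i => mem_image_of_mem φ (orderEmbOfFin_mem s hs i)) fun i j hij => ?_) i).symm
  exact hφ (orderEmbOfFin_mem s hs i) (orderEmbOfFin_mem s hs j) (by simpa using hij)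

lemma FormsPattern.exists_eq_pair (h : FormsPattern r e f P) (he : e.card = r) (hf : f.card = r)
    (hef : e.min < f.min) :
    ∃ (A B : Finset ℕ) (hA : A.card = r) (hB : B.card = r), P = {A, B} ∧ 1 ∈ A ∧ 1 ∉ B ∧
      ∀ i j, A.orderEmbOfFin hA i < B.orderEmbOfFin hB j ↔
        e.orderEmbOfFin he i < f.orderEmbOfFin hf j := by
  obtain ⟨φ, hφ, himg, rfl⟩ := h
  have hφe : StrictMonoOn φ e := hφ.mono (coe_subset.mpr subset_union_left)
  have hφf : StrictMonoOn φ f := hφ.mono (coe_subset.mpr subset_union_right)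
  obtain ⟨m, hm⟩ : ∃ m : ℕ, e.min = m := Option.ne_none_iff_exists'.mp hef.ne_top
  have hme : m ∈ e := mem_of_min hm
  have hmf {y : ℕ} (hy : y ∈ f) : m < y :=
    WithTop.coe_lt_coe.mp ((hm ▸ hef).trans_le (min_le hy))
  have hφ_pos {y : ℕ} (hy : y ∈ e ∪ f) : 1 ≤ φ y :=
    (mem_Icc.mp (himg ▸ mem_image_of_mem φ hy)).1
  refine ⟨e.image φ, f.image φ, by rwa [card_image_of_injOn hφe.injOn],
    by rwa [card_image_of_injOn hφf.injOn], rfl, ?_, ?_, fun i j => ?_⟩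
  · have hr : 0 < r := he ▸ card_pos.mpr ⟨m, hme⟩
    obtain ⟨y, hy, hy1⟩ : ∃ y ∈ e ∪ f, φ y = 1 :=
      mem_image.mp (himg ▸ mem_Icc.mpr (by lia))
    have hmy : m ≤ y := (mem_union.mp hy).elim (min_le_of_eq · hm) fun hyf => (hmf hyf).le
    have : φ m ≤ 1 := hy1 ▸ hφ.monotoneOn (mem_union_left f hme) hy hmy
    exact mem_image.mpr ⟨m, hme, this.antisymm (hφ_pos (mem_union_left f hme))⟩
  · rintro h1
    obtain ⟨y, hy, hy1⟩ := mem_image.mp h1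
    exact (hφ_pos (mem_union_left f hme)).not_gt
      (hy1 ▸ hφ (mem_union_left f hme) (mem_union_right e hy) (hmf hy))
  · rw [orderEmbOfFin_image hφe he, orderEmbOfFin_image hφf hf]
    exact hφ.lt_iff_lt (mem_union_left f (orderEmbOfFin_mem e he i))
      (mem_union_right e (orderEmbOfFin_mem f hf j))

lemma FormsPattern.orderEmbOfFin_lt_iff (h : FormsPattern r e f P) (h' : FormsPattern r e' f' P)
    (hef : e.min < f.min) (hef' : e'.min < f'.min) (he : e.card = r) (hf : f.card = r)
    (he' : e'.card = r) (hf' : f'.card = r) (i j : Fin r) :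
    e.orderEmbOfFin he i < f.orderEmbOfFin hf j ↔
      e'.orderEmbOfFin he' i < f'.orderEmbOfFin hf' j := by
  obtain ⟨A, B, hA, hB, rfl, h1A, h1B, hAB⟩ := h.exists_eq_pair he hf hef
  obtain ⟨A', B', hA', hB', hP, h1A', h1B', hAB'⟩ := h'.exists_eq_pair he' hf' hef'
  obtain rfl : A = A' := by
    have : A ∈ ({A', B'} : Finset _) := hP ▸ mem_insert_self A {B}
    aesop
  obtain rfl : B = B' := by
    have : B ∈ ({A, B'} : Finset _) := hP ▸ mem_insert_of_mem (mem_singleton_self B)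
    aesop
  rw [← hAB, hAB']

lemma exists_strictMono_comp_of_injOn {α β : Type*} [LinearOrder β] {key : α → β} {K : Finset α}
    {n : ℕ} (hkey : Set.InjOn key K) (hK : K.card = n) :
    ∃ s : Fin n → α, (∀ i, s i ∈ K) ∧ StrictMono (key ∘ s) := by
  have hcard : (K.image key).card = n := by rw [card_image_of_injOn hkey, hK]
  choose s hs hskey using fun i => mem_image.mp (orderEmbOfFin_mem (K.image key) hcard i)
  exact ⟨s, hs, fun i j hij => by simpa [hskey] using hij⟩

lemma IsClique.injOn_min {Ps : Set (Finset (Finset ℕ))} {K : Finset (Finset ℕ)}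
    (hK : IsClique r Ps K) : Set.InjOn Finset.min (K : Set (Finset ℕ)) := by
  obtain ⟨hcard, hdisj, -⟩ := hK
  intro e he f hf hef
  by_contra hne
  rcases e.eq_empty_or_nonempty with rfl | hne'
  · exact hne (card_eq_zero.mp ((hcard f hf).trans (hcard ∅ he).symm)).symm
  · obtain ⟨m, hm⟩ := min_of_nonempty hne'
    exact disjoint_left.mp (hdisj e he f hf hne) (mem_of_min hm) (mem_of_min (hef ▸ hm))

lemma IsClique.exists_isInterleaving_of_card_eq_three {K : Finset (Finset ℕ)}
    (hK : IsClique r {P} K) (h3 : K.card = 3) :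
    ∃ (T : Fin r → Fin r → Prop) (a : Fin 3 → Fin r → ℕ), IsInterleaving T a ∧
      FormsPattern r (univ.image (a 0)) (univ.image (a 1)) P := by
  obtain ⟨s, hsK, hs⟩ := exists_strictMono_comp_of_injOn hK.injOn_min h3
  obtain ⟨hcard, hdisj, hform⟩ := hK
  have hscard (x) : (s x).card = r := hcard _ (hsK x)
  have hsform {x y : Fin 3} (hxy : x < y) : FormsPattern r (s x) (s y) P := by
    obtain ⟨_, rfl, h⟩ := hform _ (hsK x) _ (hsK y) (hs.injective.of_comp.ne hxy.ne)
    exact h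
  have hdisj' {x y : Fin 3} (hxy : x ≠ y) : Disjoint (s x) (s y) :=
    hdisj _ (hsK x) _ (hsK y) (hs.injective.of_comp.ne hxy)
  let a (x : Fin 3) : Fin r → ℕ := (s x).orderEmbOfFin (hscard x)
  have ha_mem (x : Fin 3) (i : Fin r) : a x i ∈ s x := orderEmbOfFin_mem (s x) (hscard x) i
  let T (i j : Fin r) : Prop := a 0 i < a 1 j
  have ha_lt {x y : Fin 3} (hxy : x < y) (i j : Fin r) : a x i < a y j ↔ T i j :=
    (hsform hxy).orderEmbOfFin_lt_iff (hsform (by decide)) (hs hxy) (hs (by decide)) _ _ _ _ i j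
  refine ⟨T, a, ?_, by simpa [a] using hsform (x := 0) (y := 1) (by decide)⟩
  rintro ⟨x, i⟩ ⟨y, j⟩
  rcases lt_trichotomy x y with hxy | rfl | hxy
  · simp [InterleavedLT, hxy, hxy.ne, hxy.not_gt, ha_lt]
  · simp [InterleavedLT, a]
  · have ha_ne : a x i ≠ a y j := (hdisj' hxy.ne').forall_ne_finset (ha_mem x i) (ha_mem y j)
    simp [InterleavedLT, hxy, hxy.ne', hxy.not_gt, ← ha_lt hxy, ha_ne.le_iff_lt]

lemma IsInterleaving.card_image {a : ι → Fin r → ℕ} (ha : IsInterleaving T a) (x : ι) :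
    (univ.image (a x)).card = r := by
  have hinj : Function.Injective (a x) := fun i j hij => (ha.apply_eq_apply_iff.mp hij).2
  rw [card_image_of_injective _ hinj, card_fin]

lemma IsInterleaving.disjoint_image {a : ι → Fin r → ℕ} (ha : IsInterleaving T a) {x y : ι}
    (hxy : x ≠ y) : Disjoint (univ.image (a x)) (univ.image (a y)) := by
  simp only [disjoint_left, mem_image, mem_univ, true_and]
  rintro _ ⟨i, rfl⟩ ⟨j, hij⟩
  exact hxy (ha.apply_eq_apply_iff.mp hij).1.symm

lemma IsInterleaving.injective_image {a : ι → Fin r → ℕ} (ha : IsInterleaving T a) (hr : 0 < r) :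
    Function.Injective fun x => univ.image (a x) := fun x y hxy => by
  by_contra hne
  have hempty : univ.image (a x) = ∅ := by
    simpa [← show univ.image (a x) = univ.image (a y) from hxy] using ha.disjoint_image hne
  exact hr.ne (by simpa [hempty] using ha.card_image x)

theorem IsInterleaving.collectable {a : Fin 3 → Fin r → ℕ} (ha : IsInterleaving T a)
    (hr : 0 < r) (h : FormsPattern r (univ.image (a 0)) (univ.image (a 1)) P) :
    Collectable r P := by
  intro k
  obtain ⟨b, hb⟩ := ha.exists_isInterleaving (ι := Fin k)
  have hform {x y : Fin k} (hxy : x < y) := ha.formsPattern hb (x := 0) (y := 1) (by decide) hxy h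
  refine ⟨univ.image fun x => univ.image (b x), ⟨?_, ?_, ?_⟩, by
    rw [card_image_of_injective _ (hb.injective_image hr), card_fin]⟩ <;>
  simp only [mem_image, mem_univ, true_and, forall_exists_index, forall_apply_eq_imp_iff,
    (hb.injective_image hr).ne_iff, Set.mem_singleton_iff, exists_eq_left]
  · exact hb.card_image
  · exact fun x y => hb.disjoint_image
  · intro x y hne
    rcases lt_or_gt_of_ne hne with hxy | hyx
    exacts [hform hxy, (hform hyx).symm]

theorem IsClique.collectable_of_card_eq_three {K : Finset (Finset ℕ)} (hK : IsClique r {P} K)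
    (h3 : K.card = 3) : Collectable r P := by
  obtain ⟨T, a, ha, hform⟩ := hK.exists_isInterleaving_of_card_eq_three h3
  refine ha.collectable (Nat.pos_of_ne_zero fun hr => ?_) hform
  have hK_sub : K ⊆ {∅} := fun e he => by simpa [hr] using hK.1 e he
  simpa [h3] using card_le_card hK_sub

end Pattern

section Ramsey

variable {α : Type*} (G : SimpleGraph α) {s : Finset α}

lemma exists_isNClique_three_or_compl_of_forall_adj {v : α} (ht : #s = 3)
    (hv : ∀ w ∈ s, G.Adj v w) :
    (∃ t ⊆ insert v s, G.IsNClique 3 t) ∨ ∃ t ⊆ insert v s, Gᶜ.IsNClique 3 t := by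
  by_cases hedge : ∃ a ∈ s, ∃ b ∈ s, G.Adj a b
  · obtain ⟨a, ha, b, hb, hab⟩ := hedge
    refine .inl ⟨{v, a, b}, by simp [insert_subset_iff, ha, hb], ?_⟩
    exact SimpleGraph.is3Clique_triple_iff.mpr ⟨hv a ha, hv b hb, hab⟩
  · push Not at hedge
    exact .inr ⟨s, subset_insert v s, fun a ha b hb hab => ⟨hab, hedge a ha b hb⟩, ht⟩

theorem exists_isNClique_three_or_compl (hs : 6 ≤ #s) :
    (∃ t ⊆ s, G.IsNClique 3 t) ∨ ∃ t ⊆ s, Gᶜ.IsNClique 3 t := by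
  obtain ⟨v, hv⟩ : s.Nonempty := card_pos.mp (by lia)
  have hcover : s ⊆ insert v ({w ∈ s | G.Adj v w} ∪ {w ∈ s | Gᶜ.Adj v w}) := fun w hw => by
    simp only [mem_insert, mem_union, mem_filter, SimpleGraph.compl_adj, hw]
    tauto
  have hcard := (card_le_card hcover).trans <| (card_insert_le _ _).trans <|
    Nat.succ_le_succ (card_union_le _ _)
  have of_three_le (H : SimpleGraph α) (h : 3 ≤ #{w ∈ s | H.Adj v w}) :
      (∃ t ⊆ s, H.IsNClique 3 t) ∨ ∃ t ⊆ s, Hᶜ.IsNClique 3 t := by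
    obtain ⟨u, hu, hu3⟩ := exists_subset_card_eq h
    have hus : insert v u ⊆ s := insert_subset hv (hu.trans (filter_subset _ s))
    exact (exists_isNClique_three_or_compl_of_forall_adj H hu3
      fun w hw => (mem_filter.mp (hu hw)).2).imp
        (fun ⟨t, ht, h3⟩ => ⟨t, ht.trans hus, h3⟩) fun ⟨t, ht, h3⟩ => ⟨t, ht.trans hus, h3⟩
  rcases (by lia : 3 ≤ #{w ∈ s | G.Adj v w} ∨ 3 ≤ #{w ∈ s | Gᶜ.Adj v w}) with h | h
  · exact of_three_le G h
  · simpa [or_comm] using of_three_le Gᶜ (by convert h)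

end Ramsey

section CliqueSize

variable {r : ℕ} {P Q : Finset (Finset ℕ)} {Ps : Set (Finset (Finset ℕ))} {K : Finset (Finset ℕ)}

lemma IsClique.mono (hK : IsClique r Ps K) {t : Finset (Finset ℕ)} (ht : t ⊆ K) :
    IsClique r Ps t :=
  ⟨fun e he => hK.1 e (ht he), fun e he f hf => hK.2.1 e (ht he) f (ht hf),
    fun e he f hf => hK.2.2 e (ht he) f (ht hf)⟩

theorem IsClique.card_le_five (hP : ¬ Collectable r P) (hQ : ¬ Collectable r Q)
    (hK : IsClique r {P, Q} K) : K.card ≤ 5 := by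
  by_contra! h6
  let G : SimpleGraph (Finset ℕ) :=
    { Adj e f := e ≠ f ∧ FormsPattern r e f P
      symm := ⟨fun _ _ h => ⟨h.1.symm, h.2.symm⟩⟩
      loopless := ⟨fun _ h => h.1 rfl⟩ }
  rcases exists_isNClique_three_or_compl G h6 with ⟨t, htK, ht, ht3⟩ | ⟨t, htK, ht, ht3⟩ <;>
    obtain ⟨hcard, hdisj, hform⟩ := hK.mono htK
  · refine hP (IsClique.collectable_of_card_eq_three ⟨hcard, hdisj, ?_⟩ ht3)
    exact fun e he f hf hef => ⟨P, rfl, (ht he hf hef).2⟩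
  · refine hQ (IsClique.collectable_of_card_eq_three ⟨hcard, hdisj, fun e he f hf hef => ?_⟩ ht3)
    obtain ⟨S, rfl | rfl, hS⟩ := hform e he f hf hef
    · exact absurd ⟨hef, hS⟩ (ht he hf hef).2
    · exact ⟨S, rfl, hS⟩

lemma IsOrderedMatching.isClique (hP : IsOrderedMatching r 2 P) (hPs : P ∈ Ps) :
    IsClique r Ps P := by
  obtain ⟨hP2, hcard, hdisj, hunion⟩ := hP
  refine ⟨hcard, hdisj, fun e he f hf hef => ⟨P, hPs, id, strictMonoOn_id, ?_⟩⟩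
  obtain rfl : {e, f} = P :=
    eq_of_subset_of_card_le (by simp [insert_subset_iff, he, hf]) (by rw [hP2, card_pair hef])
  simpa [mul_comm] using hunion

end CliqueSize

section MatchingsOn

variable {α : Type*} [DecidableEq α] {r n : ℕ} {S e : Finset α} {M T : Finset (Finset α)}

/-- `M` partitions the finite set `S` into `n` edges of size `r`. Counting matchings by removing
an edge leaves the vertex sets `{1, …, r * n}` of `IsOrderedMatching`. -/
def IsMatchingOn (r n : ℕ) (S : Finset α) (M : Finset (Finset α)) : Prop :=
  M.card = n ∧ (∀ e ∈ M, e.card = r) ∧ (∀ e ∈ M, ∀ f ∈ M, e ≠ f → Disjoint e f) ∧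
    M.biUnion id = S

/-- The finset of all partitions of `S` into `n` edges of size `r`. -/
noncomputable def matchingsOn (r n : ℕ) (S : Finset α) : Finset (Finset (Finset α)) :=
  S.powerset.powerset.filter (IsMatchingOn r n S)

lemma matchingFamilies_eq_matchingsOn (r n : ℕ) :
    matchingFamilies r n = matchingsOn r n (Icc 1 (r * n)) := rfl

lemma IsMatchingOn.subset_powersetCard (hM : IsMatchingOn r n S M) : M ⊆ powersetCard r S :=
  fun e he => mem_powersetCard.mpr
    ⟨hM.2.2.2 ▸ subset_biUnion_of_mem id he, hM.2.1 e he⟩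

lemma mem_matchingsOn : M ∈ matchingsOn r n S ↔ IsMatchingOn r n S M := by
  simp only [matchingsOn, mem_filter, mem_powerset, and_iff_right_iff_imp]
  exact fun hM e he => mem_powerset.mpr (mem_powersetCard.mp (hM.subset_powersetCard he)).1

lemma IsMatchingOn.erase (hM : IsMatchingOn r (n + 1) S M) (he : e ∈ M) :
    IsMatchingOn r n (S \ e) (M.erase e) := by
  obtain ⟨hn, hcard, hdisj, rfl⟩ := hM
  refine ⟨by rw [card_erase_of_mem he, hn, Nat.add_sub_cancel],
    fun f hf => hcard f (mem_of_mem_erase hf), fun f hf g hg =>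
      hdisj f (mem_of_mem_erase hf) g (mem_of_mem_erase hg), ?_⟩
  have herase : Disjoint e ((M.erase e).biUnion id) := by
    simp only [disjoint_biUnion_right, id]
    exact fun f hf => hdisj e he f (mem_of_mem_erase hf) (ne_of_mem_erase hf).symm
  rw [← insert_erase he, biUnion_insert, id, union_sdiff_cancel_left herase,
    erase_insert (notMem_erase e M)]

lemma IsMatchingOn.notMem_of_sdiff (hM : IsMatchingOn r n (S \ e) M) (hr : 0 < r) : e ∉ M := by
  intro he
  obtain ⟨hsub, hcard⟩ := mem_powersetCard.mp (hM.subset_powersetCard he)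
  rw [(disjoint_self_iff_empty e).mp (disjoint_sdiff.mono_right hsub), card_empty] at hcard
  exact hr.ne hcard

lemma IsMatchingOn.insert (hM : IsMatchingOn r n (S \ e) M) (hr : 0 < r)
    (he : e ∈ powersetCard r S) : IsMatchingOn r (n + 1) S (insert e M) := by
  have hdisj {f : Finset α} (hf : f ∈ M) : Disjoint e f :=
    disjoint_sdiff.mono_right (mem_powersetCard.mp (hM.subset_powersetCard hf)).1
  have he_notMem := hM.notMem_of_sdiff hr
  obtain ⟨hn, hcard, hM_disj, hunion⟩ := hM
  obtain ⟨heS, her⟩ := mem_powersetCard.mp he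
  refine ⟨by rw [card_insert_of_notMem he_notMem, hn], by simpa [her] using hcard, ?_, ?_⟩
  · simp only [mem_insert]
    rintro f (rfl | hf) g (rfl | hg) hfg
    exacts [absurd rfl hfg, hdisj hg, (hdisj hf).symm, hM_disj f hf g hg hfg]
  · rw [biUnion_insert, hunion, id, union_sdiff_of_subset heS]

lemma sum_matchingsOn_filter_mem {β : Type*} [AddCommMonoid β] (hr : 0 < r)
    (he : e ∈ powersetCard r S) (F : Finset (Finset α) → β) :
    ∑ M ∈ matchingsOn r (n + 1) S with e ∈ M, F (M.erase e) =
      ∑ M ∈ matchingsOn r n (S \ e), F M := by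
  refine sum_bij' (fun M _ => M.erase e) (fun M _ => insert e M) ?_ ?_ ?_ ?_ fun _ _ => rfl
  · intro M hM
    obtain ⟨hM, heM⟩ := mem_filter.mp hM
    exact mem_matchingsOn.mpr ((mem_matchingsOn.mp hM).erase heM)
  · intro M hM
    exact mem_filter.mpr ⟨mem_matchingsOn.mpr ((mem_matchingsOn.mp hM).insert hr he),
      mem_insert_self e M⟩
  · exact fun M hM => insert_erase (mem_filter.mp hM).2
  · exact fun M hM => erase_insert ((mem_matchingsOn.mp hM).notMem_of_sdiff hr)

lemma card_matchingsOn_filter_mem (hr : 0 < r) (he : e ∈ powersetCard r S) :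
    #{M ∈ matchingsOn r (n + 1) S | e ∈ M} = #(matchingsOn r n (S \ e)) := by
  simpa only [card_eq_sum_ones] using sum_matchingsOn_filter_mem hr he fun _ => 1

lemma card_sdiff_of_mem_powersetCard (he : e ∈ powersetCard r S) (hS : #S = r * (n + 1)) :
    #(S \ e) = r * n := by
  obtain ⟨heS, her⟩ := mem_powersetCard.mp he
  rw [card_sdiff_of_subset heS, hS, her, mul_add_one, Nat.add_sub_cancel]

lemma succ_mul_uniformBell_succ (hr : 0 < r) (n : ℕ) :
    (n + 1) * Nat.uniformBell (n + 1) r = (r * (n + 1)).choose r * Nat.uniformBell n r := by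
  obtain ⟨k, rfl⟩ := Nat.exists_eq_add_one.mpr hr
  have hchoose := Nat.add_one_mul_choose_eq (n * (k + 1) + k) k
  rw [show n * (k + 1) + k + 1 = (k + 1) * (n + 1) by ring] at hchoose
  rw [Nat.uniformBell_succ_left, ← mul_assoc, ← add_assoc, Nat.add_sub_cancel,
    Nat.add_sub_cancel]
  congr 1
  refine Nat.eq_of_mul_eq_mul_right k.add_one_pos ?_
  rw [← hchoose]
  ring

theorem card_matchingsOn (hr : 0 < r) (hS : #S = r * n) :
    #(matchingsOn r n S) = Nat.uniformBell n r := by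
  induction n generalizing S with
  | zero =>
    obtain rfl := card_eq_zero.mp hS
    have hempty : matchingsOn r 0 (∅ : Finset α) = {∅} := by
      ext M
      simp +contextual [mem_matchingsOn, IsMatchingOn, iff_def]
    rw [hempty, card_singleton, Nat.uniformBell_zero_left]
  | succ n ih =>
    refine Nat.eq_of_mul_eq_mul_left n.succ_pos ?_
    calc (n + 1) * #(matchingsOn r (n + 1) S)
        = ∑ M ∈ matchingsOn r (n + 1) S, #(powersetCard r S ∩ M) := by
          rw [sum_const_nat fun M hM => ?_, mul_comm]
          have hM := mem_matchingsOn.mp hM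
          rw [inter_eq_right.mpr hM.subset_powersetCard, hM.1]
      _ = #(powersetCard r S) * Nat.uniformBell n r := sum_card_inter fun e he => by
          rw [card_matchingsOn_filter_mem hr he, ih (card_sdiff_of_mem_powersetCard he hS)]
      _ = (n + 1) * Nat.uniformBell (n + 1) r := by
          rw [card_powersetCard, hS, succ_mul_uniformBell_succ hr]

theorem sum_card_inter_matchingsOn (hr : 0 < r) (hS : #S = r * (n + 1))
    (hT : T ⊆ powersetCard r S) :
    ∑ M ∈ matchingsOn r (n + 1) S, #(T ∩ M) = #T * Nat.uniformBell n r :=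
  sum_card_inter fun e he => by
    rw [card_matchingsOn_filter_mem hr (hT he),
      card_matchingsOn hr (card_sdiff_of_mem_powersetCard (hT he) hS)]

lemma sum_card_inter_matchingsOn_le (hr : 0 < r) (hS : #S = r * (n + 1)) (T : Finset (Finset α)) :
    ∑ M ∈ matchingsOn r (n + 1) S, #(T ∩ M) ≤ #T * Nat.uniformBell n r := by
  refine sum_card_inter_le fun e _ => ?_
  by_cases he : e ∈ powersetCard r S
  · rw [card_matchingsOn_filter_mem hr he,
      card_matchingsOn hr (card_sdiff_of_mem_powersetCard he hS)]
  · have hempty : {M ∈ matchingsOn r (n + 1) S | e ∈ M} = ∅ := filter_eq_empty_iff.mpr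
      fun M hM heM => he ((mem_matchingsOn.mp hM).subset_powersetCard heM)
    simp [hempty]

lemma sum_card_inter_sq_matchingsOn_le (hr : 0 < r) (hS : #S = r * (n + 2))
    (hT : T ⊆ powersetCard r S) :
    ∑ M ∈ matchingsOn r (n + 2) S, #(T ∩ M) ^ 2 ≤
      #T * (Nat.uniformBell (n + 1) r + #T * Nat.uniformBell n r) := by
  have hcond {e : Finset α} (he : e ∈ T) :
      ∑ M ∈ matchingsOn r (n + 2) S with e ∈ M, #(T ∩ M) ≤
        Nat.uniformBell (n + 1) r + #T * Nat.uniformBell n r := by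
    have hSe := card_sdiff_of_mem_powersetCard (hT he) hS
    calc ∑ M ∈ matchingsOn r (n + 2) S with e ∈ M, #(T ∩ M)
        = ∑ M ∈ matchingsOn r (n + 2) S with e ∈ M, (1 + #(T.erase e ∩ M.erase e)) :=
          sum_congr rfl fun M hM => by
            rw [erase_inter, inter_erase, erase_idem, add_comm,
              card_erase_add_one (mem_inter.mpr ⟨he, (mem_filter.mp hM).2⟩)]
      _ = ∑ M ∈ matchingsOn r (n + 1) (S \ e), (1 + #(T.erase e ∩ M)) :=
          sum_matchingsOn_filter_mem hr (hT he) fun M => 1 + #(T.erase e ∩ M)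
      _ ≤ Nat.uniformBell (n + 1) r + #(T.erase e) * Nat.uniformBell n r := by
          rw [sum_add_distrib, ← card_eq_sum_ones, card_matchingsOn hr hSe]
          gcongr
          exact sum_card_inter_matchingsOn_le hr hSe _
      _ ≤ Nat.uniformBell (n + 1) r + #T * Nat.uniformBell n r := by
          gcongr
          exact erase_subset e T
  calc ∑ M ∈ matchingsOn r (n + 2) S, #(T ∩ M) ^ 2
      = ∑ M ∈ matchingsOn r (n + 2) S, ∑ e ∈ T with e ∈ M, #(T ∩ M) := by
        simp only [sum_const, filter_mem_eq_inter, smul_eq_mul, sq]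
    _ = ∑ e ∈ T, ∑ M ∈ matchingsOn r (n + 2) S with e ∈ M, #(T ∩ M) := by
        simp only [sum_filter]
        exact sum_comm
    _ ≤ #T * (Nat.uniformBell (n + 1) r + #T * Nat.uniformBell n r) := by
        simpa using sum_le_sum fun e he => hcond he

end MatchingsOn

section Probability

open Filter Topology

variable {r n : ℕ} {A B : Finset (Finset ℕ) → Prop}

lemma prob_nonneg (r n : ℕ) (A : Finset (Finset ℕ) → Prop) : 0 ≤ prob r n A := by
  unfold prob; positivity

lemma prob_le_one (r n : ℕ) (A : Finset (Finset ℕ) → Prop) : prob r n A ≤ 1 :=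
  div_le_one_of_le₀ (mod_cast card_filter_le _ _) (Nat.cast_nonneg _)

lemma prob_mono (h : ∀ M ∈ matchingFamilies r n, A M → B M) : prob r n A ≤ prob r n B := by
  unfold prob
  gcongr with M hM
  exact h M hM

lemma prob_add_prob_le (r n : ℕ) (A B : Finset (Finset ℕ) → Prop) :
    prob r n A + prob r n B ≤ prob r n (fun M => A M ∧ B M) + 1 := by
  have hand : prob r n (fun M => A M ∧ B M) =
      #((matchingFamilies r n).filter A ∩ (matchingFamilies r n).filter B) /
        #(matchingFamilies r n) := by
    unfold prob
    congr 3
    ext M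
    simp only [mem_filter, mem_inter]
    tauto
  have hunion : #((matchingFamilies r n).filter A ∪ (matchingFamilies r n).filter B) ≤
      #(matchingFamilies r n) :=
    card_le_card (union_subset (filter_subset _ _) (filter_subset _ _))
  rw [hand, prob, prob, ← add_div, ← Nat.cast_add, ← card_inter_add_card_union, Nat.cast_add,
    add_div]
  gcongr
  exact div_le_one_of_le₀ (mod_cast hunion) (Nat.cast_nonneg _)

lemma sq_expect_le_prob_mul_expect_sq {X : Finset (Finset ℕ) → ℝ} (hA : ∀ M, X M ≠ 0 → A M) :
    expect r n X ^ 2 ≤ prob r n A * expect r n (fun M => X M ^ 2) := by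
  simp only [_root_.expect, prob, div_pow, div_mul_div_comm, ← sq]
  gcongr
  calc (∑ M ∈ matchingFamilies r n, X M) ^ 2
      = (∑ M ∈ matchingFamilies r n with A M, X M) ^ 2 := by
        rw [sum_filter_of_ne fun M _ => hA M]
    _ ≤ #{M ∈ matchingFamilies r n | A M} * ∑ M ∈ matchingFamilies r n with A M, X M ^ 2 :=
        sq_sum_le_card_mul_sum_sq
    _ ≤ #{M ∈ matchingFamilies r n | A M} * ∑ M ∈ matchingFamilies r n, X M ^ 2 := by
        gcongr
        exact filter_subset _ _

lemma uniformBell_pos (m n : ℕ) : 0 < Nat.uniformBell m n := by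
  rw [Nat.uniformBell_eq]
  exact prod_pos fun p _ => Nat.choose_pos (by lia)

lemma card_matchingFamilies (hr : 0 < r) (n : ℕ) :
    #(matchingFamilies r n) = Nat.uniformBell n r := by
  rw [matchingFamilies_eq_matchingsOn, card_matchingsOn hr (by simp)]

variable {T : Finset (Finset ℕ)}

theorem expect_card_inter (hr : 0 < r) (hT : T ⊆ powersetCard r (Icc 1 (r * (n + 1)))) :
    expect r (n + 1) (fun M => (#(T ∩ M) : ℝ)) =
      #T * Nat.uniformBell n r / Nat.uniformBell (n + 1) r := by
  rw [_root_.expect, card_matchingFamilies hr, matchingFamilies_eq_matchingsOn]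
  congr 1
  exact_mod_cast sum_card_inter_matchingsOn hr (by simp) hT

lemma expect_card_inter_sq_le (hr : 0 < r) (hT : T ⊆ powersetCard r (Icc 1 (r * (n + 2)))) :
    expect r (n + 2) (fun M => (#(T ∩ M) : ℝ) ^ 2) ≤
      expect r (n + 2) (fun M => (#(T ∩ M) : ℝ)) +
        expect r (n + 2) (fun M => (#(T ∩ M) : ℝ)) ^ 2 *
          (Nat.uniformBell (n + 2) r * Nat.uniformBell n r / Nat.uniformBell (n + 1) r ^ 2) := by
  have hpos (k : ℕ) : (0 : ℝ) < Nat.uniformBell k r := mod_cast uniformBell_pos k r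
  have h₁ := hpos (n + 1)
  have h₂ := hpos (n + 2)
  calc expect r (n + 2) (fun M => (#(T ∩ M) : ℝ) ^ 2)
      ≤ #T * (Nat.uniformBell (n + 1) r + #T * Nat.uniformBell n r) /
          Nat.uniformBell (n + 2) r := by
        rw [_root_.expect, card_matchingFamilies hr, matchingFamilies_eq_matchingsOn]
        gcongr
        exact_mod_cast sum_card_inter_sq_matchingsOn_le hr (by simp) hT
    _ = _ := by
        rw [expect_card_inter hr hT]
        field_simp

theorem inv_le_prob_inter_nonempty (hr : 0 < r) (hT : T ⊆ powersetCard r (Icc 1 (r * (n + 2))))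
    (hpos : 0 < expect r (n + 2) (fun M => (#(T ∩ M) : ℝ))) :
    ((expect r (n + 2) (fun M => (#(T ∩ M) : ℝ)))⁻¹ +
      Nat.uniformBell (n + 2) r * Nat.uniformBell n r / Nat.uniformBell (n + 1) r ^ 2)⁻¹ ≤
        prob r (n + 2) (fun M => (T ∩ M).Nonempty) := by
  have hsq := sq_expect_le_prob_mul_expect_sq (r := r) (n := n + 2) (X := fun M => (#(T ∩ M) : ℝ))
    (A := fun M => (T ∩ M).Nonempty) fun M hM => card_ne_zero.mp (Nat.cast_ne_zero.mp hM)
  have hvar := expect_card_inter_sq_le hr hT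
  set μ := expect r (n + 2) (fun M => (#(T ∩ M) : ℝ))
  set p := prob r (n + 2) (fun M => (T ∩ M).Nonempty)
  set ρ : ℝ := Nat.uniformBell (n + 2) r * Nat.uniformBell n r / Nat.uniformBell (n + 1) r ^ 2
  rw [inv_le_iff_one_le_mul₀ (by positivity)]
  refine le_of_mul_le_mul_left ?_ (pow_pos hpos 2)
  calc μ ^ 2 * 1 ≤ p * (μ + μ ^ 2 * ρ) :=
        (mul_one _).trans_le (hsq.trans (mul_le_mul_of_nonneg_left hvar (prob_nonneg _ _ _)))
    _ = μ ^ 2 * (p * (μ⁻¹ + ρ)) := by field_simp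

lemma tendsto_choose_add_div_choose (d k : ℕ) :
    Tendsto (fun n : ℕ => ((n + d).choose k : ℝ) / n.choose k) atTop (𝓝 1) := by
  have hequiv := ((isEquivalent_choose k).comp_tendsto (tendsto_add_atTop_nat d)).div
    (isEquivalent_choose k)
  have hratio : Tendsto (fun n : ℕ => ((d + 1 * n : ℝ) / (0 + 1 * n)) ^ k) atTop (𝓝 1) := by
    simpa using (tendsto_add_mul_div_add_mul_atTop_nhds (d : ℝ) 0 1 one_ne_zero).pow k
  refine hequiv.tendsto_nhds_iff.mpr (hratio.congr fun n => ?_)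
  have hk : (k.factorial : ℝ) ≠ 0 := mod_cast k.factorial_ne_zero
  simp [div_pow, div_div_div_cancel_right₀ hk, add_comm]

lemma tendsto_uniformBell_mul_div_sq (hr : 0 < r) :
    Tendsto (fun n : ℕ => (Nat.uniformBell (n + 2) r * Nat.uniformBell n r /
      Nat.uniformBell (n + 1) r ^ 2 : ℝ)) atTop (𝓝 1) := by
  have hlin : Tendsto (fun n : ℕ => n * r + r - 1) atTop atTop := by
    refine tendsto_atTop_mono (fun n => ?_) tendsto_id
    have := Nat.le_mul_of_pos_right n hr
    simp only [id]
    lia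
  refine ((tendsto_choose_add_div_choose r (r - 1)).comp hlin).congr fun n => ?_
  have h₀ : (Nat.uniformBell n r : ℝ) ≠ 0 := mod_cast (uniformBell_pos n r).ne'
  have hc : ((n * r + r - 1).choose (r - 1) : ℝ) ≠ 0 := mod_cast (Nat.choose_pos (by lia)).ne'
  have hshift : n * r + r - 1 + r = (n + 1) * r + r - 1 := by rw [add_one_mul]; lia
  rw [Function.comp_apply, hshift, Nat.uniformBell_succ_left (n + 1), Nat.uniformBell_succ_left n]
  push_cast
  field_simp

theorem tendsto_prob_inter_nonempty (hr : 0 < r) {T : ℕ → Finset (Finset ℕ)}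
    (hT : ∀ n, T n ⊆ powersetCard r (Icc 1 (r * n)))
    (hexp : Tendsto (fun n => expect r n (fun M => (#(T n ∩ M) : ℝ))) atTop atTop) :
    Tendsto (fun n => prob r n (fun M => (T n ∩ M).Nonempty)) atTop (𝓝 1) := by
  rw [← tendsto_add_atTop_iff_nat 2] at hexp ⊢
  refine tendsto_of_tendsto_of_tendsto_of_le_of_le' ?_ tendsto_const_nhds
    ((hexp.eventually_gt_atTop 0).mono fun n hn => inv_le_prob_inter_nonempty hr (hT _) hn)
    (.of_forall fun n => prob_le_one _ _ _)
  simpa using (hexp.inv_tendsto_atTop.add (tendsto_uniformBell_mul_div_sq hr)).inv₀ (by simp)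

theorem tendsto_prob_forall_mem {ι : Type*} {A : ι → ℕ → Finset (Finset ℕ) → Prop} (K : Finset ι)
    (hr : 0 < r) (hA : ∀ i ∈ K, Tendsto (fun n => prob r n (A i n)) atTop (𝓝 1)) :
    Tendsto (fun n => prob r n (fun M => ∀ i ∈ K, A i n M)) atTop (𝓝 1) := by
  induction K using Finset.induction_on with
  | empty =>
    refine tendsto_const_nhds.congr fun n => ?_
    simp [prob, card_matchingFamilies hr, (uniformBell_pos n r).ne']
  | insert i K _ ih =>
    simp only [forall_mem_insert] at hA ⊢
    have hsum := (hA.1.add (ih hA.2)).sub_const 1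
    rw [add_sub_cancel_right] at hsum
    exact tendsto_of_tendsto_of_tendsto_of_le_of_le hsum tendsto_const_nhds
      (fun n => sub_le_iff_le_add.mpr (prob_add_prob_le r n _ _)) fun n => prob_le_one _ _ _

end Probability

section BlowUp

open Filter Topology

variable {r n m L N : ℕ} {h : Finset ℕ} {Ps : Set (Finset (Finset ℕ))} {K M : Finset (Finset ℕ)}

/-- Cut `{1, 2, …}` into consecutive blocks of length `L`, numbered from `0`. These are the sets
of `#h` points of `{1, …, m}` with one point in each of the blocks whose number lies in `h`.
Such a set and one in the blow-up of a set disjoint from `h` are interleaved as those two sets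
are, which transfers cliques to random matchings. -/
def blowUp (m L : ℕ) (h : Finset ℕ) : Finset (Finset ℕ) :=
  {e ∈ powersetCard #h (Icc 1 m) | e.image (fun x => (x - 1) / L) = h}

lemma pow_card_le_card_blowUp (hm : ∀ i ∈ h, (i + 1) * L ≤ m) : L ^ #h ≤ #(blowUp m L h) := by
  let point (c : h → Fin L) (i : h) : ℕ := i * L + c i + 1
  have hblock (c : h → Fin L) (i : h) : (point c i - 1) / L = i := by
    have hL : 0 < L := (c i).pos
    simp [point, Nat.add_div_of_dvd_right, hL, Nat.div_eq_of_lt (c i).isLt]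
  have hpoint_mem (c : h → Fin L) (i : h) : point c i ∈ Icc 1 m := by
    have := hm i i.2
    have := (c i).isLt
    simp only [point, mem_Icc, add_one_mul] at *
    lia
  have hinj (c : h → Fin L) : Function.Injective (point c) := fun i j hij =>
    Subtype.ext (by rw [← hblock c i, hij, hblock c j])
  calc L ^ #h = #(univ : Finset (h → Fin L)) := by simp
    _ ≤ #(blowUp m L h) := card_le_card_of_injOn (fun c => univ.image (point c)) ?_ ?_
  · intro c _
    refine mem_filter.mpr ⟨mem_powersetCard.mpr ⟨?_, ?_⟩, ?_⟩
    · exact image_subset_iff.mpr fun i _ => hpoint_mem c i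
    · rw [card_image_of_injective _ (hinj c), card_univ, Fintype.card_coe]
    · simp [image_image, Function.comp_def, hblock]
  · intro c _ d _ hcd
    ext i
    have hmem : point c i ∈ univ.image (point d) :=
      (show univ.image (point c) = univ.image (point d) from hcd) ▸
        mem_image_of_mem (point c) (mem_univ i)
    obtain ⟨j, -, hj⟩ := mem_image.mp hmem
    obtain rfl : j = i := Subtype.ext (by rw [← hblock d j, hj, hblock c i])
    simpa [point] using hj.symm

lemma mul_div_pow_le_expect_card_inter {T : Finset (Finset ℕ)} (hr : 0 < r) (hn : 0 < n)
    (hT : T ⊆ powersetCard r (Icc 1 (r * n))) :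
    #T * (n / (r * n) ^ r : ℝ) ≤ expect r n (fun M => (#(T ∩ M) : ℝ)) := by
  obtain ⟨k, rfl⟩ := Nat.exists_eq_add_one.mpr hn
  have hbell (j : ℕ) : (0 : ℝ) < Nat.uniformBell j r := mod_cast uniformBell_pos j r
  have hrec : ((k + 1 : ℕ) * Nat.uniformBell (k + 1) r : ℝ) ≤
      (r * (k + 1 : ℕ)) ^ r * Nat.uniformBell k r := by
    exact_mod_cast (succ_mul_uniformBell_succ hr k).trans_le
      (Nat.mul_le_mul_right _ (Nat.choose_le_pow _ _))
  rw [expect_card_inter hr hT, mul_div_assoc]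
  refine mul_le_mul_of_nonneg_left ?_ (Nat.cast_nonneg _)
  rw [div_le_div_iff₀ (by positivity) (hbell _)]
  linarith

lemma tendsto_expect_card_blowUp_inter (hr : 0 < r) (hh : #h = r) (hN : 0 < N)
    (hhN : ∀ i ∈ h, i < N) :
    Tendsto (fun n => expect r n (fun M => (#(blowUp (r * n) (n / N) h ∩ M) : ℝ)))
      atTop atTop := by
  have hlin : Tendsto (fun n : ℕ => (n : ℝ) / (2 * N * r) ^ r) atTop atTop :=
    tendsto_natCast_atTop_atTop.atTop_div_const (by positivity)
  refine tendsto_atTop_mono' _ ((eventually_ge_atTop N).mono fun n hn => ?_) hlin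
  have hn_pos : 0 < n := hN.trans_le hn
  have hL : n ≤ 2 * N * (n / N) := by
    have := Nat.div_add_mod n N
    have := Nat.mod_lt n hN
    have := Nat.le_mul_of_pos_right N (Nat.div_pos hn hN)
    lia
  have hcard : (n / N) ^ r ≤ #(blowUp (r * n) (n / N) h) := hh ▸ pow_card_le_card_blowUp fun i hi =>
    calc (i + 1) * (n / N) ≤ N * (n / N) := Nat.mul_le_mul_right _ (hhN i hi)
      _ ≤ n := Nat.mul_div_le n N
      _ ≤ #h * n := Nat.le_mul_of_pos_left n (hh ▸ hr)
  calc (n : ℝ) / (2 * N * r) ^ r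
      ≤ ((n / N : ℕ) : ℝ) ^ r * (n / (r * n) ^ r) := by
        have hL' : (r * n : ℝ) ≤ 2 * N * r * (n / N : ℕ) := by
          exact_mod_cast (Nat.mul_le_mul_left r hL).trans_eq (by ring)
        rw [mul_div_left_comm, ← div_pow, div_eq_mul_inv, ← inv_pow]
        gcongr
        rw [le_div_iff₀ (by positivity), inv_mul_le_iff₀ (by positivity)]
        exact hL'
    _ ≤ #(blowUp (r * n) (n / N) h) * (n / (r * n) ^ r) := by
        gcongr
        exact_mod_cast hcard
    _ ≤ expect r n (fun M => (#(blowUp (r * n) (n / N) h ∩ M) : ℝ)) :=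
        mul_div_pow_le_expect_card_inter hr hn_pos (hh ▸ filter_subset _ _)

lemma strictMonoOn_block_of_mem_blowUp {h' e e' : Finset ℕ} (hhh' : Disjoint h h')
    (he : e ∈ blowUp m L h) (he' : e' ∈ blowUp m L h') :
    StrictMonoOn (fun x => (x - 1) / L) ↑(e ∪ e') := by
  simp only [blowUp, mem_filter, mem_powersetCard] at he he'
  obtain ⟨⟨-, hcard⟩, himg⟩ := he
  obtain ⟨⟨-, hcard'⟩, himg'⟩ := he'
  have hmono : Monotone fun x => (x - 1) / L := fun x y hxy =>
    Nat.div_le_div_right (Nat.sub_le_sub_right hxy 1)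
  refine (hmono.monotoneOn _).strictMonoOn_of_injOn (card_image_iff.mp (card_image_le.antisymm ?_))
  rw [image_union, himg, himg', card_union_of_disjoint hhh', ← hcard, ← hcard']
  exact card_union_le e e'

theorem IsClique.exists_isClique_of_inter_blowUp_nonempty (hK : IsClique r Ps K)
    (hdisj : ∀ e ∈ M, ∀ f ∈ M, e ≠ f → Disjoint e f)
    (hM : ∀ h ∈ K, (blowUp m L h ∩ M).Nonempty) :
    ∃ K' ⊆ M, IsClique r Ps K' ∧ K'.card = K.card := by
  choose! e he using hM
  have he_blowUp {h : Finset ℕ} (hh : h ∈ K) : e h ∈ blowUp m L h := (mem_inter.mp (he h hh)).1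
  have he_mem {h : Finset ℕ} (hh : h ∈ K) : e h ∈ M := (mem_inter.mp (he h hh)).2
  have he_image {h : Finset ℕ} (hh : h ∈ K) : (e h).image (fun x => (x - 1) / L) = h :=
    (mem_filter.mp (he_blowUp hh)).2
  have he_inj : Set.InjOn e K := fun h hh h' hh' heq => by
    rw [← he_image hh, ← he_image hh', heq]
  refine ⟨K.image e, image_subset_iff.mpr fun h hh => he_mem hh, ⟨?_, ?_, ?_⟩,
    card_image_of_injOn he_inj⟩ <;>
  simp only [forall_mem_image]
  · intro h hh
    rw [← hK.1 h hh]
    exact (mem_powersetCard.mp (mem_filter.mp (he_blowUp hh)).1).2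
  · exact fun h hh h' hh' => hdisj _ (he_mem hh) _ (he_mem hh')
  · intro h hh h' hh' hne
    have hhh' : h ≠ h' := fun heq => hne (congrArg e heq)
    obtain ⟨P, hP, hform⟩ := hK.2.2 h hh h' hh' hhh'
    refine ⟨P, hP, FormsPattern.of_image (strictMonoOn_block_of_mem_blowUp
      (hK.2.1 h hh h' hh' hhh') (he_blowUp hh) (he_blowUp hh')) ?_⟩
    rwa [he_image hh, he_image hh']

lemma isClique_empty : IsClique r Ps ∅ := by simp [IsClique]

lemma exists_isClique_card_eq_maxCliqueSize
    (hbdd : BddAbove {k | ∃ K : Finset (Finset ℕ), IsClique r Ps K ∧ K.card = k}) :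
    ∃ K : Finset (Finset ℕ), IsClique r Ps K ∧ K.card = maxCliqueSize r Ps :=
  Nat.sSup_mem (s := {k | ∃ K : Finset (Finset ℕ), IsClique r Ps K ∧ K.card = k})
    ⟨0, ∅, isClique_empty, card_empty⟩ hbdd

lemma zClique_eq_maxCliqueSize_of_subset
    (hbdd : BddAbove {k | ∃ K : Finset (Finset ℕ), IsClique r Ps K ∧ K.card = k})
    (hKM : K ⊆ M) (hK : IsClique r Ps K) (hcard : K.card = maxCliqueSize r Ps) :
    zClique r Ps M = maxCliqueSize r Ps := by
  have hsub : {k | ∃ K ⊆ M, IsClique r Ps K ∧ K.card = k} ⊆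
      {k | ∃ K : Finset (Finset ℕ), IsClique r Ps K ∧ K.card = k} :=
    fun k ⟨K', _, hK'⟩ => ⟨K', hK'⟩
  have hmem : maxCliqueSize r Ps ∈ {k | ∃ K ⊆ M, IsClique r Ps K ∧ K.card = k} :=
    ⟨K, hKM, hK, hcard⟩
  exact (csSup_le_csSup hbdd ⟨_, hmem⟩ hsub).antisymm (le_csSup (hbdd.mono hsub) hmem)

theorem tendsto_prob_zClique_eq_maxCliqueSize (hr : 0 < r)
    (hbdd : BddAbove {k | ∃ K : Finset (Finset ℕ), IsClique r Ps K ∧ K.card = k}) :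
    Tendsto (fun n => prob r n (fun M => zClique r Ps M = maxCliqueSize r Ps)) atTop (𝓝 1) := by
  obtain ⟨K, hK, hKcard⟩ := exists_isClique_card_eq_maxCliqueSize hbdd
  obtain ⟨N, hN⟩ := exists_nat_subset_range (K.biUnion id)
  have hN' {h : Finset ℕ} (hh : h ∈ K) (i : ℕ) (hi : i ∈ h) : i < N + 1 :=
    (mem_range.mp (hN (mem_biUnion.mpr ⟨h, hh, hi⟩))).trans N.lt_succ_self
  have hmeet := tendsto_prob_forall_mem K hr
    (A := fun h n M => (blowUp (r * n) (n / (N + 1)) h ∩ M).Nonempty) fun h hh =>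
      tendsto_prob_inter_nonempty hr (fun n => hK.1 h hh ▸ filter_subset _ _)
        (tendsto_expect_card_blowUp_inter hr (hK.1 h hh) N.succ_pos (hN' hh))
  refine tendsto_of_tendsto_of_tendsto_of_le_of_le hmeet tendsto_const_nhds
    (fun n => prob_mono fun M hM hne => ?_) fun n => prob_le_one _ _ _
  obtain ⟨K', hK'M, hK', hK'card⟩ := hK.exists_isClique_of_inter_blowUp_nonempty
    (mem_filter.mp hM).2.2.2.1 hne
  exact zClique_eq_maxCliqueSize_of_subset hbdd hK'M hK' (hK'card.trans hKcard)

end BlowUp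

/-- **Theorem (non-collectable pairs).** For every `r ≥ 2` and every pair `{P, Q}` of
distinct non-collectable `r`-patterns, the maximum size `z` of a `{P,Q}`-clique satisfies
`2 ≤ z ≤ 5`, and a.a.s. `z_{{P,Q}}(RM_n^(r)) = z`. -/
theorem aas_noncollectable_pair (r : ℕ) (hr : 2 ≤ r) (P Q : Finset (Finset ℕ))
    (hP : IsOrderedMatching r 2 P) (hQ : IsOrderedMatching r 2 Q)
    (hne : P ≠ Q) (hcP : ¬ Collectable r P) (hcQ : ¬ Collectable r Q) :
    2 ≤ maxCliqueSize r {P, Q} ∧ maxCliqueSize r {P, Q} ≤ 5 ∧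
      Filter.Tendsto
        (fun n : ℕ => prob r n (fun M => zClique r {P, Q} M = maxCliqueSize r {P, Q}))
        Filter.atTop (nhds 1) := by
  have hle : ∀ k ∈ {k | ∃ K : Finset (Finset ℕ), IsClique r {P, Q} K ∧ K.card = k}, k ≤ 5 := by
    rintro _ ⟨K, hK, rfl⟩
    exact hK.card_le_five hcP hcQ
  have hP_clique : IsClique r {P, Q} P := hP.isClique (Set.mem_insert P {Q})
  refine ⟨le_csSup ⟨5, hle⟩ ⟨P, hP_clique, hP.1⟩, csSup_le ⟨2, P, hP_clique, hP.1⟩ hle, ?_⟩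
  exact tendsto_prob_zClique_eq_maxCliqueSize (by lia) ⟨5, hle⟩
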